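/- The logic S4(⋄≥, ⟟) has the local finite model property: if a formula φ of the modal language (⋄≥, ⟟) is satisfied at some world of some Kripke structure whose accessibility relation is reflexive and transitive, then φ is satisfied at some world of some Kripke structure with a finite universe whose accessibility relation is reflexive and transitive. -/

import Mathlib

/-- Formulas of the modal language `(⋄≥, ⟟)`: propositional variables, Boolean
connectives (¬, ∧ suffice), graded forward modalities `⋄≥ₙ`, and the basic
converse modality `⟟`. -/
inductive MF : Type where
  | var  : ℕ → MF
  | neg  : MF → MF
  | and  : MF → MF → MF
  | dia  : ℕ → MF → MF   -- `dia n φ` is `⋄≥ₙ φ`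
  | conv : MF → MF       -- `conv φ` is `⟟φ`

/-- Satisfaction in a Kripke structure `(W, R, V)`.  `⋄≥ₙ φ` holds at `w` iff at
least `n` worlds `v` satisfy `R w v` and `φ`; `⟟φ` holds at `w` iff some
`R`-predecessor of `w` satisfies `φ`. -/
def Sat {W : Type u} (R : W → W → Prop) (V : ℕ → Set W) : MF → W → Prop
  | .var p, w => w ∈ V p
  | .neg φ, w => ¬ Sat R V φ w
  | .and φ ψ, w => Sat R V φ w ∧ Sat R V ψ w
  | .dia n φ, w => ∃ s : Finset W, n ≤ s.card ∧ ∀ v ∈ s, R w v ∧ Sat R V φ v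
  | .conv φ, w => ∃ v : W, R v w ∧ Sat R V φ v

universe v

/-!
Comparing points by their *profiles* (the sets of successors satisfying each subformula, truncated
at the largest grade, and the subformulas satisfied by no predecessor) does not change the truth of
subformulas. Profiles are partially ordered with bounded rank, and points with the same profile that
satisfy the same subformulas can be thinned to a bounded number, so the number of profiles is the
only remaining source of infinity.

Looking upwards, a profile needs boundedly many profiles above it to keep all counts correct.
Looking downwards, it may have infinitely many profiles below it, but the converse modality only
asks which kinds of points occur there. The finite model therefore consists of all abstract nodes
(a label together with the labelled nodes above it) that can be realized by profiles with enough
support. The up-set of every node embeds into the profiles, and every profile below a realized node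
has a counterpart among the nodes, because finitely many copies of each node leave room to extend
the embedding downwards. The embeddings for different nodes need not agree: all of them respect the
types of points, which determine truth, so the induction on formulas can change the embedding at
every step.
-/

namespace MF

noncomputable instance : DecidableEq MF := Classical.decEq MF

/-- The subformulas of a formula, including the formula itself. -/
noncomputable def subformulas : MF → Finset MF
  | var p => {var p}
  | neg φ => insert (neg φ) φ.subformulas
  | and φ ψ => insert (and φ ψ) (φ.subformulas ∪ ψ.subformulas)
  | dia n φ => insert (dia n φ) φ.subformulas
  | conv φ => insert (conv φ) φ.subformulas

theorem self_mem_subformulas (φ : MF) : φ ∈ φ.subformulas := by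
  cases φ <;> simp [subformulas]

theorem mem_of_subformulas_subset {φ : MF} {cl : Finset MF} (h : φ.subformulas ⊆ cl) : φ ∈ cl :=
  h φ.self_mem_subformulas

theorem subformulas_neg_subset {φ : MF} {cl : Finset MF} (h : (neg φ).subformulas ⊆ cl) :
    φ.subformulas ⊆ cl :=
  (Finset.subset_insert _ _).trans h

theorem subformulas_and_subset {φ ψ : MF} {cl : Finset MF} (h : (and φ ψ).subformulas ⊆ cl) :
    φ.subformulas ⊆ cl ∧ ψ.subformulas ⊆ cl :=
  Finset.union_subset_iff.1 ((Finset.subset_insert _ _).trans h)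

theorem subformulas_dia_subset {n : ℕ} {φ : MF} {cl : Finset MF}
    (h : (dia n φ).subformulas ⊆ cl) : φ.subformulas ⊆ cl :=
  (Finset.subset_insert _ _).trans h

theorem subformulas_conv_subset {φ : MF} {cl : Finset MF} (h : (conv φ).subformulas ⊆ cl) :
    φ.subformulas ⊆ cl :=
  (Finset.subset_insert _ _).trans h

/-- The largest index of a graded modality occurring in a formula. -/
def grade : MF → ℕ
  | var _ => 0
  | neg φ => φ.grade
  | and φ ψ => max φ.grade ψ.grade
  | dia n φ => max n φ.grade
  | conv φ => φ.grade

end MF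

theorem sat_dia_iff_le_encard {W : Type*} {R : W → W → Prop} {V : ℕ → Set W} {n : ℕ} {φ : MF}
    {w : W} : Sat R V (.dia n φ) w ↔ (n : ℕ∞) ≤ {v | R w v ∧ Sat R V φ v}.encard := by
  constructor
  · rintro ⟨s, hns, hs⟩
    calc (n : ℕ∞) ≤ s.card := by exact_mod_cast hns
      _ = (s : Set W).encard := (Set.encard_coe_eq_coe_finsetCard s).symm
      _ ≤ _ := Set.encard_le_encard hs
  · intro h
    obtain ⟨t, ht, htn⟩ := Set.exists_subset_encard_eq h
    have hfin : t.Finite := Set.finite_of_encard_eq_coe htn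
    refine ⟨hfin.toFinset, ?_, fun v hv => ht (hfin.mem_toFinset.1 hv)⟩
    rw [hfin.encard_eq_coe_toFinset_card] at htn
    exact_mod_cast htn.ge

section Filtration

/-- The finite subsets of `α` with fewer than `N` elements, together with a top element that
stands for all larger subsets. -/
abbrev SmallSet (α : Type*) (N : ℕ) : Type _ := WithTop {s : Finset α // s.card < N}

namespace SmallSet

variable {α : Type*} {N : ℕ} {A B : Set α}

open scoped Classical in
/-- The class of a subset of `α` in `SmallSet α N`. -/
noncomputable def ofSet (N : ℕ) (A : Set α) : SmallSet α N :=
  if h : ∃ s : Finset α, ↑s = A ∧ s.card < N then WithTop.some ⟨h.choose, h.choose_spec.2⟩ else ⊤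

theorem ofSet_coe {s : Finset α} (hs : s.card < N) :
    ofSet N (s : Set α) = WithTop.some ⟨s, hs⟩ := by
  have h : ∃ t : Finset α, (t : Set α) = s ∧ t.card < N := ⟨s, rfl, hs⟩
  rw [ofSet, dif_pos h]
  congr 2
  exact Finset.coe_injective h.choose_spec.1

theorem exists_coe_eq_of_encard_lt (hA : A.encard < N) :
    ∃ s : Finset α, ↑s = A ∧ s.card < N := by
  have hfin : A.Finite := Set.encard_lt_top_iff.1 (hA.trans (ENat.natCast_lt_top N))
  refine ⟨hfin.toFinset, hfin.coe_toFinset, ?_⟩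
  rw [hfin.encard_eq_coe_toFinset_card] at hA
  exact_mod_cast hA

theorem ofSet_of_le_encard (hA : N ≤ A.encard) : ofSet N A = ⊤ := by
  refine dif_neg ?_
  rintro ⟨s, rfl, hs⟩
  rw [Set.encard_coe_eq_coe_finsetCard] at hA
  exact absurd hs (not_lt.2 (by exact_mod_cast hA))

theorem ofSet_mono : Monotone (ofSet N : Set α → SmallSet α N) := by
  intro A B hAB
  rcases lt_or_ge B.encard N with hB | hB
  · obtain ⟨t, rfl, ht⟩ := exists_coe_eq_of_encard_lt hB
    obtain ⟨s, rfl, hs⟩ := exists_coe_eq_of_encard_lt ((Set.encard_le_encard hAB).trans_lt hB)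
    rw [ofSet_coe hs, ofSet_coe ht, WithTop.coe_le_coe]
    exact Finset.coe_subset.1 hAB
  · rw [ofSet_of_le_encard hB]
    exact le_top

theorem subset_of_ofSet_le (h : ofSet N A ≤ ofSet N B) (hB : B.encard < N) : A ⊆ B := by
  obtain ⟨t, rfl, ht⟩ := exists_coe_eq_of_encard_lt hB
  rw [ofSet_coe ht] at h
  rcases lt_or_ge A.encard N with hA | hA
  · obtain ⟨s, rfl, hs⟩ := exists_coe_eq_of_encard_lt hA
    rw [ofSet_coe hs, WithTop.coe_le_coe] at h
    exact Finset.coe_subset.2 h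
  · rw [ofSet_of_le_encard hA, top_le_iff] at h
    exact absurd h (WithTop.coe_ne_top)

/-- The number of elements of a small set, counted as `N` for the top element. -/
def size (s : SmallSet α N) : ℕ := WithTop.recTopCoe N (fun t => t.1.card) s

theorem size_le (s : SmallSet α N) : s.size ≤ N := by
  induction s using WithTop.recTopCoe with
  | top => exact le_rfl
  | coe t => exact t.2.le

theorem size_strictMono : StrictMono (size : SmallSet α N → ℕ) :=
  WithTop.strictMono_iff.2 ⟨fun _ _ h => Finset.card_lt_card h, fun t => t.2⟩

end SmallSet

variable {W : Type*} {R : W → W → Prop} {V : ℕ → Set W} {cl : Finset MF} {N : ℕ}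

/-- The profiles of the worlds of a structure: the first component records, for each formula of
`cl`, a truncated set of successors, the second a set of formulas without predecessor. Both shrink
along a transitive relation, hence the order dual. -/
abbrev Profile (W : Type*) (cl : Finset MF) (N : ℕ) : Type _ :=
  ((cl → SmallSet W N) × Finset cl)ᵒᵈ

open scoped Classical in
/-- The profile of a world. Comparing profiles is the relation of the filtrated structure. -/
noncomputable def profile (R : W → W → Prop) (V : ℕ → Set W) (cl : Finset MF) (N : ℕ) (w : W) :
    Profile W cl N :=
  OrderDual.toDual (fun ψ => .ofSet N {v | R w v ∧ Sat R V ψ v},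
    Finset.univ.filter fun ψ => ¬ ∃ u, R u w ∧ Sat R V ψ u)

theorem profile_le_iff {u w : W} :
    profile R V cl N u ≤ profile R V cl N w ↔
      (∀ ψ ∈ cl, SmallSet.ofSet N {v | R w v ∧ Sat R V ψ v} ≤ .ofSet N {v | R u v ∧ Sat R V ψ v}) ∧
        ∀ ψ ∈ cl, (∃ v, R v u ∧ Sat R V ψ v) → ∃ v, R v w ∧ Sat R V ψ v := by
  rw [profile, profile, OrderDual.toDual_le_toDual, Prod.mk_le_mk, Pi.le_def, Finset.subset_iff]
  simp only [Finset.mem_filter_univ, not_imp_not, Subtype.forall]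

theorem profile_mono (htrans : ∀ x y z, R x y → R y z → R x z) {u w : W} (h : R u w) :
    profile R V cl N u ≤ profile R V cl N w :=
  profile_le_iff.2 ⟨fun _ _ => SmallSet.ofSet_mono fun v hv => ⟨htrans u w v h hv.1, hv.2⟩,
    fun _ _ ⟨v, hvu, hv⟩ => ⟨v, htrans v u w hvu h, hv⟩⟩

/-- The number of steps that remain possible in a strictly increasing sequence of profiles. -/
def Profile.rank (d : Profile W cl N) : ℕ :=
  ∑ ψ, ((OrderDual.ofDual d).1 ψ).size + (OrderDual.ofDual d).2.card

theorem Profile.rank_strictAnti : StrictAnti (rank : Profile W cl N → ℕ) := by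
  have hsum : StrictMono fun f : cl → SmallSet W N => ∑ ψ, (f ψ).size := by
    intro f g hfg
    obtain ⟨hle, ψ, hψ⟩ := Pi.lt_def.1 hfg
    exact Finset.sum_lt_sum (fun χ _ => SmallSet.size_strictMono.monotone (hle χ))
      ⟨ψ, Finset.mem_univ ψ, SmallSet.size_strictMono hψ⟩
  intro d e hde
  rcases Prod.lt_iff.1 (show OrderDual.ofDual e < OrderDual.ofDual d from hde) with
    ⟨h₁, h₂⟩ | ⟨h₁, h₂⟩
  · exact add_lt_add_of_lt_of_le (hsum h₁) (Finset.card_le_card h₂)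
  · exact add_lt_add_of_le_of_lt (hsum.monotone h₁) (Finset.card_lt_card h₂)

theorem Profile.rank_le (d : Profile W cl N) : d.rank ≤ cl.card * N + cl.card := by
  have hsum : ∑ ψ, ((OrderDual.ofDual d).1 ψ).size ≤ cl.card * N := by
    simpa using Finset.sum_le_card_nsmul Finset.univ _ N
      fun ψ _ => SmallSet.size_le ((OrderDual.ofDual d).1 ψ)
  exact add_le_add hsum (by simpa using Finset.card_le_univ (OrderDual.ofDual d).2)

theorem le_encard_profile_le_iff (hrefl : ∀ x, R x x) (htrans : ∀ x y z, R x y → R y z → R x z)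
    {n : ℕ} (hn : n ≤ N) {ψ : MF} (hψ : ψ ∈ cl) {w : W} :
    (n : ℕ∞) ≤ {v | profile R V cl N w ≤ profile R V cl N v ∧ Sat R V ψ v}.encard ↔
      (n : ℕ∞) ≤ {v | R w v ∧ Sat R V ψ v}.encard := by
  refine ⟨fun h => ?_, fun h => h.trans (Set.encard_le_encard fun v hv =>
    ⟨profile_mono htrans hv.1, hv.2⟩)⟩
  rcases lt_or_ge {v | R w v ∧ Sat R V ψ v}.encard N with hlt | hge
  · refine h.trans (Set.encard_le_encard fun v hv => ?_)
    exact SmallSet.subset_of_ofSet_le ((profile_le_iff.1 hv.1).1 ψ hψ) hlt ⟨hrefl v, hv.2⟩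
  · exact le_trans (by exact_mod_cast hn) hge

theorem sat_profile_le_iff (hrefl : ∀ x, R x x) (htrans : ∀ x y z, R x y → R y z → R x z)
    {χ : MF} (hcl : χ.subformulas ⊆ cl) (hN : χ.grade ≤ N) (w : W) :
    Sat (fun u v => profile R V cl N u ≤ profile R V cl N v) V χ w ↔ Sat R V χ w := by
  induction χ generalizing w with
  | var p => exact Iff.rfl
  | neg ψ ih => exact not_congr (ih (MF.subformulas_neg_subset hcl) hN w)
  | and ψ θ ihψ ihθ =>
    exact and_congr (ihψ (MF.subformulas_and_subset hcl).1 (le_of_max_le_left hN) w)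
      (ihθ (MF.subformulas_and_subset hcl).2 (le_of_max_le_right hN) w)
  | dia n ψ ih =>
    have hψ := MF.subformulas_dia_subset hcl
    simp only [sat_dia_iff_le_encard, ih hψ (le_of_max_le_right hN)]
    exact le_encard_profile_le_iff hrefl htrans (le_of_max_le_left hN)
      (MF.mem_of_subformulas_subset hψ)
  | conv ψ ih =>
    have hψ := MF.subformulas_conv_subset hcl
    have hmem := MF.mem_of_subformulas_subset hψ
    constructor
    · rintro ⟨v, hvw, hv⟩
      exact (profile_le_iff.1 hvw).2 ψ hmem ⟨v, hrefl v, (ih hψ hN v).1 hv⟩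
    · rintro ⟨v, hvw, hv⟩
      exact ⟨v, profile_mono htrans hvw, (ih hψ hN v).2 hv⟩

end Filtration

section Charts

variable {W U T : Type*} {N : ℕ} {R : W → W → Prop} {S : U → U → Prop} {τ : W → T} {σ : U → T}

/-- A chart at `x` compares the neighbourhood of `x` in the coloured graph `(U, S, σ)` with that of
`π x` in `(W, R, τ)`: it embeds the successors of `x`, and up to the threshold `N` no set of
colours is lost. Predecessors are matched one at a time, as the converse modality does not count. -/
structure IsChart (N : ℕ) (S : U → U → Prop) (σ : U → T) (R : W → W → Prop) (τ : W → T)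
    (x : U) (π : U → W) : Prop where
  rel : ∀ y, S x y → R (π x) (π y)
  injOn : Set.InjOn π {y | S x y}
  colour_eq : ∀ y, S x y → τ (π y) = σ y
  min_encard_le : ∀ P : Set T,
    min (N : ℕ∞) {v | R (π x) v ∧ τ v ∈ P}.encard ≤ {y | S x y ∧ σ y ∈ P}.encard
  back : ∀ v, R v (π x) → ∃ y, S y x ∧ σ y = τ v

theorem IsChart.le_encard_iff {x : U} {π : U → W} (h : IsChart N S σ R τ x π) {n : ℕ} (hn : n ≤ N)
    (P : Set T) :
    (n : ℕ∞) ≤ {y | S x y ∧ σ y ∈ P}.encard ↔ (n : ℕ∞) ≤ {v | R (π x) v ∧ τ v ∈ P}.encard := by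
  have hmaps : π '' {y | S x y ∧ σ y ∈ P} ⊆ {v | R (π x) v ∧ τ v ∈ P} := by
    rintro _ ⟨y, ⟨hxy, hy⟩, rfl⟩
    exact ⟨h.rel y hxy, (h.colour_eq y hxy).symm ▸ hy⟩
  refine ⟨fun hle => ?_, fun hle => (le_min (Nat.cast_le.2 hn) hle).trans (h.min_encard_le P)⟩
  rw [← (h.injOn.mono fun y hy => hy.1).encard_image] at hle
  exact hle.trans (Set.encard_le_encard hmaps)

theorem IsChart.comp {Z : Type*} {Q : Z → Z → Prop} {κ : Z → T} {x : U} {π : U → W} {ρ : W → Z}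
    (hρ : IsChart N R τ Q κ (π x) ρ) (hπ : IsChart N S σ R τ x π) :
    IsChart N S σ Q κ x (ρ ∘ π) where
  rel y hy := hρ.rel (π y) (hπ.rel y hy)
  injOn := hρ.injOn.comp hπ.injOn hπ.rel
  colour_eq y hy := (hρ.colour_eq (π y) (hπ.rel y hy)).trans (hπ.colour_eq y hy)
  min_encard_le P :=
    (le_min (min_le_left _ _) (hρ.min_encard_le P)).trans (hπ.min_encard_le P)
  back z hz := by
    obtain ⟨v, hv, hvz⟩ := hρ.back z hz
    obtain ⟨y, hy, hyv⟩ := hπ.back v hv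
    exact ⟨y, hy, hyv.trans hvz⟩

/-- The formulas of `cl` satisfied at a world, the colour to which charts are applied. -/
def satType (R : W → W → Prop) (V : ℕ → Set W) (cl : Finset MF) (w : W) : Set cl :=
  {ψ | Sat R V ψ w}

/-- Charts at different points need not agree, but all of them respect the colouring, so the
induction may change the chart at every modality. -/
theorem sat_iff_mem_of_isChart {cl : Finset MF} {V : ℕ → Set W} {V' : ℕ → Set U} {σ : U → Set cl}
    (hS : ∀ x, S x x) (hchart : ∀ x, ∃ π, IsChart N S σ R (satType R V cl) x π)
    (hV : ∀ p (h : .var p ∈ cl) x, x ∈ V' p ↔ ⟨.var p, h⟩ ∈ σ x)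
    {χ : MF} (hcl : χ.subformulas ⊆ cl) (hN : χ.grade ≤ N) (x : U) :
    Sat S V' χ x ↔ ⟨χ, MF.mem_of_subformulas_subset hcl⟩ ∈ σ x := by
  have mem_iff {x : U} {π : U → W} (h : IsChart N S σ R (satType R V cl) x π) {ψ : MF}
      (hψ : ψ ∈ cl) : ⟨ψ, hψ⟩ ∈ σ x ↔ Sat R V ψ (π x) := by
    rw [← h.colour_eq x (hS x)]
    rfl
  induction χ generalizing x with
  | var p => exact hV p _ x
  | neg ψ ih =>
    obtain ⟨π, h⟩ := hchart x
    rw [mem_iff h]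
    exact not_congr ((ih (MF.subformulas_neg_subset hcl) hN x).trans (mem_iff h _))
  | and ψ θ ihψ ihθ =>
    obtain ⟨π, h⟩ := hchart x
    obtain ⟨hψ, hθ⟩ := MF.subformulas_and_subset hcl
    rw [mem_iff h]
    exact and_congr ((ihψ hψ (le_of_max_le_left hN) x).trans (mem_iff h _))
      ((ihθ hθ (le_of_max_le_right hN) x).trans (mem_iff h _))
  | dia n ψ ih =>
    obtain ⟨π, h⟩ := hchart x
    have hψ := MF.subformulas_dia_subset hcl
    simp only [mem_iff h, sat_dia_iff_le_encard, ih hψ (le_of_max_le_right hN)]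
    exact h.le_encard_iff (le_of_max_le_left hN) {t | ⟨ψ, MF.mem_of_subformulas_subset hψ⟩ ∈ t}
  | conv ψ ih =>
    have hψ := MF.subformulas_conv_subset hcl
    have hmem := MF.mem_of_subformulas_subset hψ
    obtain ⟨π, h⟩ := hchart x
    rw [mem_iff h]
    constructor
    · rintro ⟨y, hyx, hy⟩
      obtain ⟨ρ, hρ⟩ := hchart y
      have hx : ⟨.conv ψ, MF.mem_of_subformulas_subset hcl⟩ ∈ satType R V cl (ρ x) :=
        ⟨ρ y, hρ.rel x hyx, (mem_iff hρ hmem).1 ((ih hψ hN y).1 hy)⟩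
      rw [hρ.colour_eq x hyx] at hx
      exact (mem_iff h _).1 hx
    · rintro ⟨v, hvx, hv⟩
      obtain ⟨y, hyx, hy⟩ := h.back v hvx
      refine ⟨y, hyx, (ih hψ hN y).2 ?_⟩
      rw [hy]
      exact hv

end Charts

section Thinning

variable {W E : Type*} {κ : W → E} {A : Set W} {N : ℕ}

/-- A thinning keeps, in every fibre of `κ`, all points if there are fewer than `N` of them, and
exactly `N` points otherwise. -/
def IsThinning (κ : W → E) (N : ℕ) (A : Set W) : Prop :=
  ∀ e, (A ∩ κ ⁻¹' {e}).encard = min (N : ℕ∞) (κ ⁻¹' {e}).encard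

theorem exists_isThinning (κ : W → E) (N : ℕ) : ∃ A, IsThinning κ N A := by
  choose pick hpick hcard using fun e =>
    Set.exists_subset_encard_eq (min_le_right (N : ℕ∞) (κ ⁻¹' {e}).encard)
  refine ⟨{w | w ∈ pick (κ w)}, fun e => ?_⟩
  rw [← hcard e]
  congr 1
  ext w
  constructor
  · rintro ⟨hw, rfl⟩
    exact hw
  · intro hw
    obtain rfl : κ w = e := hpick e hw
    exact ⟨hw, rfl⟩

theorem IsThinning.exists_mem (hA : IsThinning κ N A) (hN : 0 < N) (w : W) :
    ∃ v ∈ A, κ v = κ w := by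
  have hpos : 0 < (A ∩ κ ⁻¹' {κ w}).encard := by
    rw [hA, lt_min_iff, Set.encard_pos]
    exact ⟨by exact_mod_cast hN, w, rfl⟩
  exact Set.encard_pos.1 hpos

theorem IsThinning.min_encard_preimage_le (hA : IsThinning κ N A) (Q : Set E) :
    min (N : ℕ∞) (κ ⁻¹' Q).encard ≤ (A ∩ κ ⁻¹' Q).encard := by
  by_cases hlarge : ∃ e ∈ Q, (N : ℕ∞) ≤ (κ ⁻¹' {e}).encard
  · obtain ⟨e, he, hNe⟩ := hlarge
    calc min (N : ℕ∞) (κ ⁻¹' Q).encard ≤ N := min_le_left _ _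
      _ = (A ∩ κ ⁻¹' {e}).encard := by rw [hA, min_eq_left hNe]
      _ ≤ (A ∩ κ ⁻¹' Q).encard := Set.encard_le_encard <|
        Set.inter_subset_inter_right _ (Set.preimage_mono (Set.singleton_subset_iff.2 he))
  · push Not at hlarge
    refine (min_le_right _ _).trans (Set.encard_le_encard fun w hw => ⟨?_, hw⟩)
    have hsmall := hlarge (κ w) hw
    have hfin : (κ ⁻¹' {κ w}).Finite :=
      Set.encard_lt_top_iff.1 (hsmall.trans (ENat.natCast_lt_top N))
    have hfull : A ∩ κ ⁻¹' {κ w} = κ ⁻¹' {κ w} :=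
      (hfin.subset Set.inter_subset_right).eq_of_subset_of_encard_le Set.inter_subset_right
        (by rw [hA, min_eq_right hsmall.le])
    exact (hfull.ge (rfl : κ w = κ w)).1

theorem IsThinning.isChart_val {D T : Type*} [LE D] {data : W → D} {τ : W → T}
    (hA : IsThinning (fun w => (data w, τ w)) N A) (hN : 0 < N) (x : A) :
    IsChart N (fun u v : A => data u ≤ data v) (fun w : A => τ w) (fun u v => data u ≤ data v) τ
      x Subtype.val where
  rel _ h := h
  injOn := Subtype.val_injective.injOn
  colour_eq _ _ := rfl
  min_encard_le P := by
    refine (hA.min_encard_preimage_le {e | data x ≤ e.1 ∧ e.2 ∈ P}).trans ?_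
    rw [← Subtype.val_injective.encard_image]
    exact Set.encard_le_encard fun w hw => ⟨⟨w, hw.1⟩, hw.2, rfl⟩
  back v hv := by
    obtain ⟨y, hyA, hy⟩ := hA.exists_mem hN v
    obtain ⟨hdata, hτ⟩ := Prod.mk.inj hy
    exact ⟨⟨y, hyA⟩, hdata.trans_le hv, hτ⟩

end Thinning

section LocalRealization

variable {D L : Type*} [PartialOrder D] {Supports : D → Set D → Prop} {lam : D → L} {rk : L → ℕ}

/-- A finite set whose elements are supported within the set, for an abstract relation
`Supports C X` expressing that `X` contains everything that `C` needs to see above itself. -/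
def IsSelfSupporting (Supports : D → Set D → Prop) (G : Finset D) : Prop :=
  ∀ v ∈ G, Supports v (G ∩ Set.Ici v)

theorem IsSelfSupporting.erase_of_minimal [DecidableEq D] {G : Finset D}
    (hG : IsSelfSupporting Supports G) {u : D} (hu : ∀ v ∈ G, ¬ v < u) :
    IsSelfSupporting Supports (G.erase u) := by
  intro v hv
  obtain ⟨hvu, hvG⟩ := Finset.mem_erase.1 hv
  convert hG v hvG using 1
  ext x
  simp only [Finset.coe_erase, Set.mem_inter_iff, Set.mem_sdiff, Set.mem_singleton_iff, Set.mem_Ici,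
    Finset.mem_coe]
  refine ⟨fun h => ⟨h.1.1, h.2⟩, fun h => ⟨⟨h.1, ?_⟩, h.2⟩⟩
  rintro rfl
  exact hu v hvG (lt_of_le_of_ne h.2 hvu)

theorem IsSelfSupporting.insert_biUnion [DecidableEq D] (hmono : ∀ C, Monotone (Supports C))
    {C : D} {X : Finset D} (hX : Supports C X) {F : D → Finset D}
    (hF : ∀ x ∈ X.erase C, x ∈ F x ∧ (∀ v ∈ F x, C ≤ v) ∧ IsSelfSupporting Supports (F x))
    (hle : ∀ x ∈ X, C ≤ x) :
    IsSelfSupporting Supports (insert C ((X.erase C).biUnion F)) := by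
  intro v hv
  rcases Finset.mem_insert.1 hv with rfl | hv
  · refine hmono v (fun x hx => ⟨?_, hle x hx⟩) hX
    rw [Finset.mem_coe, Finset.mem_insert, or_iff_not_imp_left]
    intro hxv
    have hx' := Finset.mem_erase.2 ⟨hxv, hx⟩
    exact Finset.mem_biUnion.2 ⟨x, hx', (hF x hx').1⟩
  · obtain ⟨x, hx, hvx⟩ := Finset.mem_biUnion.1 hv
    refine hmono v (Set.inter_subset_inter_left _ fun y hy => ?_) ((hF x hx).2.2 v hvx)
    exact Finset.mem_insert_of_mem (Finset.mem_biUnion.2 ⟨x, hx, hy⟩)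

theorem exists_isSelfSupporting (hmono : ∀ C, Monotone (Supports C)) {rank : D → ℕ}
    (hrank : StrictAnti rank) {k : ℕ}
    (hex : ∀ C, ∃ X : Finset D, X.card ≤ k ∧ (∀ x ∈ X, C ≤ x) ∧ Supports C X) (r : ℕ) :
    ∃ b, ∀ C, rank C < r → ∃ G : Finset D,
      C ∈ G ∧ G.card ≤ b ∧ (∀ v ∈ G, C ≤ v) ∧ IsSelfSupporting Supports G := by
  classical
  induction r with
  | zero => exact ⟨0, fun C hC => absurd hC (Nat.not_lt_zero _)⟩
  | succ r ih =>
    obtain ⟨b, hb⟩ := ih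
    refine ⟨k * b + 1, fun C hC => ?_⟩
    obtain ⟨X, hXk, hXle, hX⟩ := hex C
    have hlt : ∀ x ∈ X.erase C, C < x := fun x hx =>
      (hXle x (Finset.mem_of_mem_erase hx)).lt_of_ne' (Finset.ne_of_mem_erase hx)
    choose! F hmem hcard hle hself using fun x (hx : x ∈ X.erase C) =>
      hb x ((hrank (hlt x hx)).trans_le (Nat.le_of_lt_succ hC))
    have hleC : ∀ x ∈ X.erase C, ∀ v ∈ F x, C ≤ v := fun x hx v hv =>
      (hlt x hx).le.trans (hle x hx v hv)
    refine ⟨insert C ((X.erase C).biUnion F), Finset.mem_insert_self _ _, ?_, ?_, ?_⟩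
    · refine (Finset.card_insert_le _ _).trans (Nat.succ_le_succ ?_)
      exact (Finset.card_biUnion_le_card_mul _ _ _ hcard).trans
        (Nat.mul_le_mul_right _ ((Finset.card_erase_le).trans hXk))
    · simp only [Finset.mem_insert, Finset.mem_biUnion]
      rintro v (rfl | ⟨x, hx, hv⟩)
      · exact le_rfl
      · exact hleC x hx v hv
    · exact .insert_biUnion hmono hX (fun x hx => ⟨hmem x hx, hleC x hx, hself x hx⟩) hXle

/-- Abstract points of a finite order: a label, the finitely many points strictly above, and a
number that tells copies apart. -/
inductive Node (L : Type*) : Type _ where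
  | mk (copy : ℕ) (label : L) (above : List (Node L)) : Node L

namespace Node

noncomputable instance : DecidableEq (Node L) := Classical.decEq (Node L)

/-- The label of a node. -/
def label : Node L → L
  | mk _ l _ => l

/-- The nodes strictly above a node. -/
noncomputable def above : Node L → Finset (Node L)
  | mk _ _ Y => Y.toFinset

/-- The nodes above a node, including the node itself. -/
noncomputable def up (a : Node L) : Finset (Node L) := insert a a.above

/-- The `i`-th node with label `l` and with `Y` above it. -/
noncomputable def ofFinset (i : ℕ) (l : L) (Y : Finset (Node L)) : Node L := mk i l Y.toList

theorem above_ofFinset (i : ℕ) (l : L) (Y : Finset (Node L)) : (ofFinset i l Y).above = Y :=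
  Y.toList_toFinset

theorem ofFinset_left_injective (l : L) (Y : Finset (Node L)) :
    Function.Injective fun i => ofFinset i l Y :=
  fun _ _ h => (mk.inj h).1

theorem self_mem_up (a : Node L) : a ∈ a.up := Finset.mem_insert_self _ _

end Node

/-- `h` realizes the set `Z` of nodes, closed under passing to nodes above, by distinct points of
`D` with the right labels. -/
structure IsRealization (lam : D → L) (Z : Finset (Node L)) (h : Node L → D) : Prop where
  above_subset : ∀ a ∈ Z, a.above ⊆ Z
  lt_of_mem_above : ∀ a ∈ Z, ∀ c ∈ a.above, h a < h c
  injOn : Set.InjOn h Z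
  lam_eq : ∀ a ∈ Z, lam (h a) = a.label

namespace IsRealization

variable {Z Y : Finset (Node L)} {h : Node L → D}

theorem up_subset (hZ : IsRealization lam Z h) {a : Node L} (ha : a ∈ Z) : a.up ⊆ Z :=
  Finset.insert_subset ha (hZ.above_subset a ha)

theorem le_of_mem_up (hZ : IsRealization lam Z h) {a c : Node L} (ha : a ∈ Z) (hc : c ∈ a.up) :
    h a ≤ h c := by
  rcases Finset.mem_insert.1 hc with rfl | hc
  · exact le_rfl
  · exact (hZ.lt_of_mem_above a ha c hc).le

theorem mono (hZ : IsRealization lam Z h) (hYZ : Y ⊆ Z) (hY : ∀ a ∈ Y, a.above ⊆ Y) :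
    IsRealization lam Y h where
  above_subset := hY
  lt_of_mem_above a ha := hZ.lt_of_mem_above a (hYZ ha)
  injOn := hZ.injOn.mono hYZ
  lam_eq a ha := hZ.lam_eq a (hYZ ha)

theorem notMem_of_above_eq (hZ : IsRealization lam Z h) {c : Node L} (hc : c.above = Z) : c ∉ Z :=
  fun hcZ => (hZ.lt_of_mem_above c hcZ c (hc.symm ▸ hcZ)).false

theorem insert_update (hZ : IsRealization lam Z h) {c : Node L} (hcZ : c ∉ Z) {v : D}
    (hv : lam v = c.label) (hc : c.above ⊆ Z) (hlt : ∀ a ∈ c.above, v < h a)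
    (hvZ : v ∉ h '' Z) : IsRealization lam (insert c Z) (Function.update h c v) := by
  have hne : ∀ a ∈ Z, a ≠ c := fun a ha hac => hcZ (hac ▸ ha)
  have hold : Set.EqOn (Function.update h c v) h Z := fun a ha =>
    Function.update_of_ne (hne a ha) ..
  have hnew : Function.update h c v c = v := Function.update_self ..
  refine ⟨fun a ha => ?_, fun a ha y hy => ?_, ?_, fun a ha => ?_⟩
  · rcases Finset.mem_insert.1 ha with rfl | ha
    · exact hc.trans (Finset.subset_insert _ _)
    · exact (hZ.above_subset a ha).trans (Finset.subset_insert _ _)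
  · rcases Finset.mem_insert.1 ha with rfl | ha
    · rw [hnew, hold (hc hy)]
      exact hlt y hy
    · rw [hold ha, hold (hZ.above_subset a ha hy)]
      exact hZ.lt_of_mem_above a ha y hy
  · rw [Finset.coe_insert, Set.injOn_insert hcZ, hold.image_eq, hnew]
    exact ⟨hZ.injOn.congr hold.symm, hvZ⟩
  · rcases Finset.mem_insert.1 ha with rfl | ha
    · rw [hnew, hv]
    · rw [hold ha, hZ.lam_eq a ha]

end IsRealization

/-- Hereditarily realizable nodes: the nodes above are admissible and realized by `g`, and some
`C` below them all carries the label and is supported by the resulting picture. The number of nodes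
above is less than `f`, and copy numbers are less than `K`, which makes admissible nodes finite in
number. -/
inductive Admissible (lam : D → L) (Supports : D → Set D → Prop) (f : L → ℕ) (K : ℕ) :
    Node L → Prop
  | ofFinset {i : ℕ} {Y : Finset (Node L)} {g : Node L → D} {C : D} (hi : i < K)
      (hY : ∀ y ∈ Y, Admissible lam Supports f K y) (hg : IsRealization lam Y g)
      (hlt : ∀ y ∈ Y, C < g y) (hcard : Y.card < f (lam C))
      (hC : Supports C (insert C (g '' Y))) :
      Admissible lam Supports f K (Node.ofFinset i (lam C) Y)

theorem image_update_insert {α β : Type*} [DecidableEq α] {s : Set α} {a : α} (ha : a ∉ s)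
    (h : α → β) (v : β) :
    Function.update h a v '' insert a s = insert v (h '' s) := by
  have hold : Set.EqOn (Function.update h a v) h s := fun y hy =>
    Function.update_of_ne (ne_of_mem_of_not_mem hy ha) ..
  rw [Set.image_insert_eq, Function.update_self, hold.image_eq]

namespace Admissible

variable {f : L → ℕ} {K : ℕ} {a c : Node L}

theorem of_mem_above (ha : Admissible lam Supports f K a) (hc : c ∈ a.above) :
    Admissible lam Supports f K c := by
  obtain @⟨i, Y, g, C, -, hY, -, -, -, -⟩ := ha
  rw [Node.above_ofFinset] at hc
  exact hY c hc

theorem of_mem_up (ha : Admissible lam Supports f K a) (hc : c ∈ a.up) :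
    Admissible lam Supports f K c := by
  rcases Finset.mem_insert.1 hc with rfl | hc
  · exact ha
  · exact ha.of_mem_above hc

theorem card_up_le (ha : Admissible lam Supports f K a) : a.up.card ≤ f a.label := by
  obtain @⟨i, Y, g, C, -, -, -, -, hcard, -⟩ := ha
  refine (Finset.card_insert_le _ _).trans ?_
  rwa [Node.above_ofFinset]

theorem exists_realization (ha : Admissible lam Supports f K a) :
    ∃ g, IsRealization lam a.up g ∧ Supports (g a) (g '' a.up) := by
  obtain @⟨i, Y, g, C, -, -, hg, hlt, -, hC⟩ := ha
  set a := Node.ofFinset i (lam C) Y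
  have haY : a.above = Y := Node.above_ofFinset ..
  have hnot : a ∉ Y := hg.notMem_of_above_eq haY
  have hCY : C ∉ g '' Y := by
    rintro ⟨y, hy, rfl⟩
    exact (hlt y hy).false
  refine ⟨Function.update g a C, ?_, ?_⟩
  · rw [Node.up, haY]
    exact hg.insert_update hnot rfl haY.le (haY.symm ▸ hlt) hCY
  · rwa [Node.up, haY, Finset.coe_insert, image_update_insert hnot, Function.update_self]

theorem up_subset (ha : Admissible lam Supports f K a) (hc : c ∈ a.up) : c.up ⊆ a.up := by
  obtain ⟨g, hg, -⟩ := ha.exists_realization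
  exact hg.up_subset hc

theorem finite [Finite L] (hrk : StrictAnti (rk ∘ lam)) :
    {a | Admissible lam Supports f K a}.Finite := by
  have hlt (r : ℕ) : {a | Admissible lam Supports f K a ∧ rk a.label < r}.Finite := by
    induction r with
    | zero => simp
    | succ r ih =>
      refine (((Set.finite_Iio K).prod (Set.finite_univ.prod
        ih.toFinset.powerset.finite_toSet)).image
          fun p : ℕ × L × Finset (Node L) => Node.ofFinset p.1 p.2.1 p.2.2).subset ?_
      rintro a ⟨@⟨i, Y, g, C, hi, hY, hg, hCg, hcard, hC⟩, har⟩
      refine ⟨(i, lam C, Y), ⟨hi, trivial, Finset.mem_powerset.2 fun y hy => ?_⟩, rfl⟩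
      rw [Set.Finite.mem_toFinset]
      refine ⟨hY y hy, ?_⟩
      rw [← hg.lam_eq y hy]
      exact (hrk (hCg y hy)).trans_le (Nat.le_of_lt_succ har)
  obtain ⟨B, hB⟩ := Finite.exists_le rk
  exact (hlt (B + 1)).subset fun a ha => ⟨ha, Nat.lt_succ_of_le (hB _)⟩

theorem exists_notMem {Y Z : Finset (Node L)} {g : Node L → D} {C : D}
    (hZ : Z.card < K) (hY : ∀ y ∈ Y, Admissible lam Supports f K y) (hg : IsRealization lam Y g)
    (hlt : ∀ y ∈ Y, C < g y) (hcard : Y.card < f (lam C)) (hC : Supports C (insert C (g '' Y))) :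
    ∃ a ∉ Z, Admissible lam Supports f K a ∧ a.label = lam C ∧ a.above = Y := by
  have hinj := Node.ofFinset_left_injective (lam C) Y
  obtain ⟨a, ha, haZ⟩ : ∃ a ∈ (Finset.range K).image fun i => Node.ofFinset i (lam C) Y, a ∉ Z :=
    Finset.exists_mem_notMem_of_card_lt_card (by
      rwa [Finset.card_image_of_injective _ hinj, Finset.card_range])
  obtain ⟨i, hi, rfl⟩ := Finset.mem_image.1 ha
  exact ⟨_, haZ, .ofFinset (Finset.mem_range.1 hi) hY hg hlt hcard hC, rfl, Node.above_ofFinset ..⟩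

end Admissible

theorem IsRealization.biUnion_up {f : L → ℕ} {K : ℕ} {Z Y : Finset (Node L)} {h : Node L → D}
    (hZ : IsRealization lam Z h) (hadm : ∀ a ∈ Z, Admissible lam Supports f K a) (hYZ : Y ⊆ Z) :
    IsRealization lam (Y.biUnion Node.up) h := by
  refine hZ.mono (Finset.biUnion_subset.2 fun a ha => hZ.up_subset (hYZ ha)) fun c hc => ?_
  obtain ⟨a, ha, hca⟩ := Finset.mem_biUnion.1 hc
  exact (Finset.subset_insert _ _).trans (((hadm a (hYZ ha)).up_subset hca).trans
    (Finset.subset_biUnion_of_mem Node.up ha))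

theorem card_biUnion_lt_pow {α β : Type*} [DecidableEq β] {s : Finset α} {F : α → Finset β}
    {ρ : α → ℕ} {b m : ℕ} (hs : s.card ≤ b)
    (hF : ∀ x ∈ s, (F x).card ≤ (b + 1) ^ ρ x) (hρ : ∀ x ∈ s, ρ x < m) :
    (s.biUnion F).card < (b + 1) ^ m := by
  rcases m with - | m
  · obtain rfl : s = ∅ := Finset.eq_empty_of_forall_notMem fun x hx => Nat.not_lt_zero _ (hρ x hx)
    simp
  · calc (s.biUnion F).card ≤ s.card * (b + 1) ^ m :=
        Finset.card_biUnion_le_card_mul _ _ _ fun x hx =>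
          (hF x hx).trans (Nat.pow_le_pow_right b.succ_pos (Nat.le_of_lt_succ (hρ x hx)))
      _ ≤ b * (b + 1) ^ m := Nat.mul_le_mul_right _ hs
      _ < (b + 1) ^ m * (b + 1) := by
        rw [mul_comm]
        exact Nat.mul_lt_mul_of_pos_left b.lt_succ_self (Nat.pow_pos b.succ_pos)
      _ = (b + 1) ^ (m + 1) := (pow_succ _ _).symm

section Extension

variable {b K : ℕ} {Z : Finset (Node L)} {h : Node L → D}

theorem IsRealization.exists_adjoin (hmono : ∀ C, Monotone (Supports C))
    (hrk : StrictAnti (rk ∘ lam)) (hZ : IsRealization lam Z h)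
    (hadm : ∀ a ∈ Z, Admissible lam Supports (fun l => (b + 1) ^ rk l) K a) (hZK : Z.card < K)
    {v : D} (hvZ : v ∉ h '' Z) {X : Finset D} (hXZ : (X : Set D) ⊆ h '' Z) (hXb : X.card ≤ b)
    (hvX : ∀ x ∈ X, v < x) (hv : Supports v (insert v X)) :
    ∃ c ∉ Z, Admissible lam Supports (fun l => (b + 1) ^ rk l) K c ∧ c.label = lam v ∧
      (∀ a ∈ Z, h a ∈ X → a ∈ c.above) ∧
        IsRealization lam (insert c Z) (Function.update h c v) := by
  classical
  obtain ⟨Y, hYZ, rfl⟩ := Finset.subset_set_image_iff.1 hXZ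
  rw [Finset.coe_subset] at hYZ
  rw [Finset.card_image_of_injOn (hZ.injOn.mono hYZ)] at hXb
  rw [Finset.coe_image] at hv
  rw [Finset.forall_mem_image] at hvX
  have hsub : Y.biUnion Node.up ⊆ Z := Finset.biUnion_subset.2 fun a ha => hZ.up_subset (hYZ ha)
  have hYup : Y ⊆ Y.biUnion Node.up := fun y hy => Finset.mem_biUnion.2 ⟨y, hy, y.self_mem_up⟩
  have hlt : ∀ a ∈ Y.biUnion Node.up, v < h a := by
    intro a ha
    obtain ⟨y, hy, hay⟩ := Finset.mem_biUnion.1 ha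
    exact (hvX hy).trans_le (hZ.le_of_mem_up (hYZ hy) hay)
  have hcard : (Y.biUnion Node.up).card < (b + 1) ^ rk (lam v) := by
    refine card_biUnion_lt_pow hXb (fun y hy => (hadm y (hYZ hy)).card_up_le) fun y hy => ?_
    rw [← hZ.lam_eq y (hYZ hy)]
    exact hrk (hvX hy)
  obtain ⟨c, hcZ, hc, hlabel, habove⟩ := Admissible.exists_notMem hZK
    (fun a ha => hadm a (hsub ha)) (hZ.biUnion_up hadm hYZ) hlt hcard
    (hmono v (Set.insert_subset_insert (Set.image_mono hYup)) hv)
  refine ⟨c, hcZ, hc, hlabel, fun a haZ ha => ?_,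
    hZ.insert_update hcZ hlabel.symm (habove ▸ hsub) (habove ▸ hlt) hvZ⟩
  obtain ⟨y, hy, hya⟩ := Finset.mem_image.1 ha
  obtain rfl := hZ.injOn (hYZ hy) haZ hya
  exact habove ▸ hYup hy

/-- A self-supporting set is adjoined from the top downwards, at most one new node per element. -/
theorem IsRealization.exists_extension (hmono : ∀ C, Monotone (Supports C))
    (hrk : StrictAnti (rk ∘ lam)) (hZ : IsRealization lam Z h)
    (hadm : ∀ a ∈ Z, Admissible lam Supports (fun l => (b + 1) ^ rk l) K a) {G : Finset D}
    (hG : IsSelfSupporting Supports G) (hGb : G.card ≤ b) (hK : Z.card + G.card ≤ K) :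
    ∃ Z' h', Z ⊆ Z' ∧ Z'.card ≤ Z.card + G.card ∧ Set.EqOn h' h Z ∧ h' '' Z' = h '' Z ∪ G ∧
      IsRealization lam Z' h' ∧
        ∀ a ∈ Z', Admissible lam Supports (fun l => (b + 1) ^ rk l) K a := by
  classical
  induction G using Finset.induction_on_max_value (rk ∘ lam) with
  | empty => exact ⟨Z, h, subset_rfl, le_rfl, fun _ _ => rfl, by simp, hZ, hadm⟩
  | insert v G hvG hmax ih =>
    rw [Finset.card_insert_of_notMem hvG] at hGb hK ⊢
    have hmin : ∀ x ∈ insert v G, ¬ x < v := by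
      intro x hx hxv
      exact (hmax x (Finset.mem_of_mem_insert_of_ne hx hxv.ne)).not_gt (hrk hxv)
    have hG' : IsSelfSupporting Supports G := by
      simpa only [Finset.erase_insert hvG] using hG.erase_of_minimal hmin
    obtain ⟨Z', h', hZZ', hcard, heq, himage, hZ', hadm'⟩ := ih hG' (by omega) (by omega)
    by_cases hv : v ∈ h' '' Z'
    · refine ⟨Z', h', hZZ', by omega, heq, ?_, hZ', hadm'⟩
      rw [Finset.coe_insert, Set.union_insert, ← himage, Set.insert_eq_of_mem hv]
    have hXZ : (({x ∈ G | v < x} : Finset D) : Set D) ⊆ h' '' Z' := by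
      rw [himage]
      exact (Finset.coe_subset.2 (Finset.filter_subset _ _)).trans Set.subset_union_right
    have hsupp : Supports v (insert v ({x ∈ G | v < x} : Finset D)) := by
      refine hmono v ?_ (hG v (Finset.mem_insert_self v G))
      rintro x ⟨hx, hvx⟩
      rcases eq_or_lt_of_le hvx with rfl | hvx
      · exact Set.mem_insert _ _
      · exact Or.inr (Finset.mem_filter.2 ⟨Finset.mem_of_mem_insert_of_ne hx hvx.ne', hvx⟩)
    obtain ⟨c, hcZ, hc, -, -, hnew⟩ := hZ'.exists_adjoin hmono hrk hadm' (by omega) hv hXZ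
      ((Finset.card_filter_le _ _).trans (by omega)) (fun x hx => (Finset.mem_filter.1 hx).2) hsupp
    refine ⟨insert c Z', Function.update h' c v, hZZ'.trans (Finset.subset_insert _ _),
      (Finset.card_insert_le _ _).trans (by omega), fun a ha => ?_, ?_, hnew,
      Finset.forall_mem_insert _ _ _ |>.2 ⟨hc, hadm'⟩⟩
    · rw [Function.update_of_ne (ne_of_mem_of_not_mem (hZZ' ha) hcZ), heq ha]
    · rw [Finset.coe_insert, image_update_insert hcZ, himage, Finset.coe_insert, Set.union_insert]

theorem exists_admissible_label_eq (hmono : ∀ C, Monotone (Supports C))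
    (hrk : StrictAnti (rk ∘ lam)) {d : D} {G : Finset D} (hdG : d ∈ G)
    (hG : IsSelfSupporting Supports G) (hGb : G.card ≤ b) (hK : b ≤ K) :
    ∃ a, Admissible lam Supports (fun l => (b + 1) ^ rk l) K a ∧ a.label = lam d := by
  have hempty : IsRealization lam ∅ fun _ : Node L => d := ⟨by simp, by simp, by simp, by simp⟩
  obtain ⟨Z, h, -, -, -, himage, hZ, hadm⟩ :=
    hempty.exists_extension hmono hrk (by simp) hG hGb (by simpa using hGb.trans hK)
  obtain ⟨a, haZ, rfl⟩ : d ∈ h '' Z := himage.ge (Or.inr hdG)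
  exact ⟨a, hadm a haZ, (hZ.lam_eq a haZ).symm⟩

theorem Admissible.exists_below (hmono : ∀ C, Monotone (Supports C))
    (hrk : StrictAnti (rk ∘ lam)) {a : Node L}
    (ha : Admissible lam Supports (fun l => (b + 1) ^ rk l) K a) {g : Node L → D}
    (hg : IsRealization lam a.up g) {u : D} (hu : u < g a) {G : Finset D} (huG : u ∈ G)
    (hG : IsSelfSupporting Supports G) (hle : ∀ v ∈ G, u ≤ v) (hGb : G.card ≤ b)
    (hK : a.up.card + b ≤ K) :
    ∃ c, Admissible lam Supports (fun l => (b + 1) ^ rk l) K c ∧ c.label = lam u ∧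
      a ∈ c.above := by
  classical
  have hcard := Finset.card_erase_add_one huG
  obtain ⟨Z, h, haZ, hZcard, heq, himage, hZ, hadm⟩ := hg.exists_extension hmono hrk
    (fun c => ha.of_mem_up) (hG.erase_of_minimal fun v hv => (hle v hv).not_gt) (by omega)
    (by omega)
  have hga : h a = g a := heq a.self_mem_up
  have huZ : u ∉ h '' Z := by
    rw [himage]
    rintro (⟨c, hc, hcu⟩ | huG')
    · exact (hu.trans_le (hg.le_of_mem_up a.self_mem_up hc)).ne' hcu
    · exact Finset.notMem_erase u G huG'
  have hXZ : ((insert (h a) (G.erase u) : Finset D) : Set D) ⊆ h '' Z := by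
    rw [Finset.coe_insert, Set.insert_subset_iff, himage, hga]
    exact ⟨Or.inl (Set.mem_image_of_mem g a.self_mem_up), Set.subset_union_right⟩
  have hvX : ∀ x ∈ insert (h a) (G.erase u), u < x :=
    (Finset.forall_mem_insert _ _ _).2 ⟨hga ▸ hu, fun x hx =>
      (hle x (Finset.mem_of_mem_erase hx)).lt_of_ne' (Finset.ne_of_mem_erase hx)⟩
  have hsupp : Supports u (insert u (insert (h a) (G.erase u) : Finset D)) := by
    refine hmono u (fun x hx => ?_) (hG u huG)
    rw [← Finset.coe_insert, Finset.insert_comm, Finset.insert_erase huG]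
    exact Finset.mem_insert_of_mem hx.1
  obtain ⟨c, -, hc, hlabel, habove, -⟩ := hZ.exists_adjoin hmono hrk hadm (by omega) huZ hXZ
    ((Finset.card_insert_le _ _).trans (by omega)) hvX hsupp
  exact ⟨c, hc, hlabel, habove a (haZ a.self_mem_up) (Finset.mem_insert_self _ _)⟩

end Extension

instance {f : L → ℕ} {K : ℕ} : Preorder {a : Node L // Admissible lam Supports f K a} where
  le a c := c.1 ∈ a.1.up
  le_refl a := a.1.self_mem_up
  le_trans a _ _ hac hce := a.2.up_subset hac hce

/-- `g` embeds the up-set of `a` into `D` with the right labels and with enough support, and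
whatever lies below `g a` in `D` has a counterpart below `a`. -/
structure IsLocalEmbedding {Ω : Type*} [Preorder Ω] (lam : D → L) (Supports : D → Set D → Prop)
    (lab : Ω → L) (a : Ω) (g : Ω → D) : Prop where
  injOn : Set.InjOn g (Set.Ici a)
  le : ∀ c, a ≤ c → g a ≤ g c
  lam_eq : ∀ c, a ≤ c → lam (g c) = lab c
  supports : Supports (g a) (g '' Set.Ici a)
  exists_below : ∀ u ≤ g a, ∃ c ≤ a, lab c = lam u

theorem exists_finite_isLocalEmbedding {L : Type v} [Finite L] {lam : D → L} {rk : L → ℕ}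
    (hmono : ∀ C, Monotone (Supports C)) (hrk : StrictAnti (rk ∘ lam)) {k : ℕ}
    (hex : ∀ C, ∃ X : Finset D, X.card ≤ k ∧ (∀ x ∈ X, C ≤ x) ∧ Supports C X) :
    ∃ (Ω : Type v) (_ : Finite Ω) (_ : Preorder Ω) (lab : Ω → L),
      (∀ d, ∃ a, lab a = lam d) ∧ ∀ a, ∃ g, IsLocalEmbedding lam Supports lab a g := by
  obtain ⟨B, hB⟩ := Finite.exists_le rk
  obtain ⟨b, hself⟩ := exists_isSelfSupporting hmono hrk hex (B + 1)
  choose G hmem hcard hle hG using fun d => hself d (Nat.lt_succ_of_le (hB (lam d)))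
  let f l := (b + 1) ^ rk l
  -- Room for the up-set of a node and for a self-supporting set adjoined to it.
  let K := (b + 1) ^ B + b
  have hfin : {a | Admissible lam Supports f K a}.Finite := Admissible.finite hrk
  refine ⟨{a // Admissible lam Supports f K a}, hfin.to_subtype, inferInstance,
    fun a => a.1.label, fun d => ?_, fun ⟨a, ha⟩ => ?_⟩
  · obtain ⟨a, ha, had⟩ := exists_admissible_label_eq hmono hrk (hmem d) (hG d) (hcard d)
      (Nat.le_add_left b ((b + 1) ^ B))
    exact ⟨⟨a, ha⟩, had⟩
  · obtain ⟨g, hg, hsupp⟩ := ha.exists_realization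
    refine ⟨fun c => g c.1, fun c hc e he hce => Subtype.ext (hg.injOn hc he hce),
      fun c hc => hg.le_of_mem_up a.self_mem_up hc, fun c hc => hg.lam_eq c hc, ?_, fun u hu => ?_⟩
    · refine hmono _ ?_ hsupp
      rintro _ ⟨c, hc, rfl⟩
      exact ⟨⟨c, ha.of_mem_up hc⟩, hc, rfl⟩
    · rcases eq_or_lt_of_le hu with rfl | hu
      · exact ⟨⟨a, ha⟩, le_rfl, (hg.lam_eq a a.self_mem_up).symm⟩
      have hK : a.up.card + b ≤ K :=
        Nat.add_le_add_right (ha.card_up_le.trans (Nat.pow_le_pow_right b.succ_pos (hB _))) b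
      obtain ⟨c, hc, hcu, hac⟩ :=
        ha.exists_below hmono hrk hg hu (hmem u) (hG u) (hle u) (hcard u) hK
      exact ⟨⟨c, hc⟩, Finset.mem_insert_of_mem hac, hcu⟩

end LocalRealization

section Blowup

variable {D W : Type*} {T L : Type v} {data : W → D} {τ : W → T} {N : ℕ}

/-- `X` supports `C` if, up to the threshold `N`, the points over `X` are as numerous as all the
points over elements above `C`, for every set of colours. -/
def CountSupports [LE D] (data : W → D) (τ : W → T) (N : ℕ) (C : D) (X : Set D) : Prop :=
  ∀ P : Set T, min (N : ℕ∞) {w | C ≤ data w ∧ τ w ∈ P}.encard ≤ {w | data w ∈ X ∧ τ w ∈ P}.encard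

theorem countSupports_mono [LE D] (C : D) : Monotone (CountSupports data τ N C) :=
  fun _ _ hXY hX P => (hX P).trans (Set.encard_le_encard fun _ hw => ⟨hXY hw.1, hw.2⟩)

theorem exists_countSupports [LE D] [Finite T] (data : W → D) (τ : W → T) (N : ℕ) (C : D) :
    ∃ X : Finset D, X.card ≤ Nat.card (Set T) * N ∧ (∀ x ∈ X, C ≤ x) ∧
      CountSupports data τ N C X := by
  classical
  have := Fintype.ofFinite (Set T)
  have hpick (P : Set T) : ∃ s : Finset W, ↑s ⊆ {w | C ≤ data w ∧ τ w ∈ P} ∧ s.card ≤ N ∧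
      min (N : ℕ∞) {w | C ≤ data w ∧ τ w ∈ P}.encard = s.card := by
    obtain ⟨s, hs, hsN⟩ :=
      Set.exists_subset_encard_eq (min_le_right (N : ℕ∞) {w | C ≤ data w ∧ τ w ∈ P}.encard)
    lift s to Finset W using Set.finite_of_encard_le_coe (hsN.trans_le (min_le_left _ _))
    rw [Set.encard_coe_eq_coe_finsetCard] at hsN
    exact ⟨s, hs, by exact_mod_cast hsN.trans_le (min_le_left _ _), hsN.symm⟩
  choose s hs hcard hmin using hpick
  refine ⟨Finset.univ.biUnion fun P => (s P).image data, ?_, ?_, fun P => ?_⟩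
  · rw [Nat.card_eq_fintype_card]
    exact Finset.card_biUnion_le_card_mul _ _ _ fun P _ => Finset.card_image_le.trans (hcard P)
  · simp only [Finset.mem_biUnion, Finset.mem_image]
    rintro _ ⟨P, -, w, hw, rfl⟩
    exact (hs P hw).1
  · rw [hmin, ← Set.encard_coe_eq_coe_finsetCard]
    exact Set.encard_le_encard fun w hw => ⟨Finset.mem_biUnion.2
      ⟨P, Finset.mem_univ P, Finset.mem_image_of_mem data hw⟩, (hs P hw).2⟩

theorem exists_bijOn_Iio_ncard [Nonempty W] {s : Set W} (hs : s.Finite) :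
    ∃ e : ℕ → W, Set.BijOn e (Set.Iio s.ncard) s := by
  refine (Set.finite_Iio _).exists_bijOn_of_encard_eq ?_
  rw [← hs.cast_ncard_eq, ← (Set.finite_Iio _).cast_ncard_eq, Set.ncard_Iio_nat]

/-- Every point `a` of `Ω` is replaced by `mult (lab a) t` points of each colour `t`. -/
abbrev Blowup {Ω : Type*} (lab : Ω → L) (mult : L → T → ℕ) : Type _ :=
  Σ p : Ω × T, Fin (mult (lab p.1) p.2)

variable {Ω : Type*} {lam : D → L} {mult : L → T → ℕ}
  {e : D → T → ℕ → W} {lab : Ω → L}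

theorem exists_blowup_of_label_eq
    (he : ∀ d t, Set.BijOn (e d t) (Set.Iio (mult (lam d) t)) {w | data w = d ∧ τ w = t})
    {a : Ω} {w : W} (ha : lab a = lam (data w)) :
    ∃ x : Blowup lab mult, x.1.1 = a ∧ x.1.2 = τ w := by
  obtain ⟨i, hi, -⟩ := (he (data w) (τ w)).surjOn ⟨rfl, rfl⟩
  exact ⟨⟨(a, τ w), i, ha ▸ hi⟩, rfl, rfl⟩

theorem IsLocalEmbedding.isChart [PartialOrder D] [Preorder Ω]
    (he : ∀ d t, Set.BijOn (e d t) (Set.Iio (mult (lam d) t)) {w | data w = d ∧ τ w = t})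
    (x : Blowup lab mult) {g : Ω → D}
    (hg : IsLocalEmbedding lam (CountSupports data τ N) lab x.1.1 g) :
    IsChart N (fun x y : Blowup lab mult => x.1.1 ≤ y.1.1) (fun y => y.1.2)
      (fun u v => data u ≤ data v) τ x fun y => e (g y.1.1) y.1.2 y.2 := by
  have hlt (y : Blowup lab mult) (hy : x.1.1 ≤ y.1.1) : y.2 < mult (lam (g y.1.1)) y.1.2 := by
    rw [hg.lam_eq _ hy]
    exact y.2.2
  have hfibre (y : Blowup lab mult) (hy : x.1.1 ≤ y.1.1) :=
    (he (g y.1.1) y.1.2).mapsTo (hlt y hy)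
  refine ⟨fun y hy => ?_, fun y hy z hz hyz => ?_, fun y hy => (hfibre y hy).2, fun P => ?_,
    fun v hv => ?_⟩
  · rw [(hfibre x le_rfl).1, (hfibre y hy).1]
    exact hg.le _ hy
  · have hnode : y.1.1 = z.1.1 := hg.injOn hy hz <| by
      rw [← (hfibre y hy).1, ← (hfibre z hz).1, hyz]
    have hcolour : y.1.2 = z.1.2 := by
      rw [← (hfibre y hy).2, ← (hfibre z hz).2, hyz]
    obtain ⟨⟨a, t⟩, i⟩ := y
    obtain ⟨⟨c, s⟩, j⟩ := z
    obtain rfl : a = c := hnode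
    obtain rfl : t = s := hcolour
    obtain rfl : i = j := Fin.ext ((he _ _).injOn (hlt _ hy) (hlt _ hz) hyz)
    rfl
  · rw [(hfibre x le_rfl).1]
    refine (hg.supports P).trans (le_trans (Set.encard_le_encard ?_)
      (Set.encard_image_le (fun y : Blowup lab mult => e (g y.1.1) y.1.2 y.2) _))
    rintro w ⟨⟨c, hc, hcw⟩, hw⟩
    obtain ⟨i, hi, hiw⟩ := (he (g c) (τ w)).surjOn ⟨hcw.symm, rfl⟩
    rw [hg.lam_eq c hc] at hi
    exact ⟨⟨(c, τ w), i, hi⟩, ⟨hc, hw⟩, hiw⟩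
  · rw [(hfibre x le_rfl).1] at hv
    obtain ⟨c, hcx, hc⟩ := hg.exists_below _ hv
    obtain ⟨y, hyc, hy⟩ := exists_blowup_of_label_eq he hc
    exact ⟨y, hyc.trans_le hcx, hy⟩

theorem exists_finite_isChart_of_encard_le [PartialOrder D] [Finite T] [Nonempty W]
    {rank : D → ℕ} (hrank : StrictAnti rank) {B : ℕ} (hB : ∀ d, rank d ≤ B)
    (hfibre : ∀ d t, {w | data w = d ∧ τ w = t}.encard ≤ N) :
    ∃ (U : Type v) (S : U → U → Prop) (σ : U → T),
      Finite U ∧ (∀ x, S x x) ∧ (∀ x y z, S x y → S y z → S x z) ∧ (∀ w, ∃ x, σ x = τ w) ∧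
        ∀ x, ∃ π, IsChart N S σ (fun u v => data u ≤ data v) τ x π := by
  simp only [Set.encard_le_coe_iff_finite_ncard_le, forall_and] at hfibre
  obtain ⟨hfin, hcount⟩ := hfibre
  choose e he using fun d t => exists_bijOn_Iio_ncard (hfin d t)
  let lam d : (T → Fin (N + 1)) × Fin (B + 1) :=
    (fun t => ⟨_, Nat.lt_succ_of_le (hcount d t)⟩, ⟨rank d, Nat.lt_succ_of_le (hB d)⟩)
  obtain ⟨Ω, _, _, lab, hlab, hloc⟩ := exists_finite_isLocalEmbedding (lam := lam)
    (rk := fun l => l.2) countSupports_mono hrank (exists_countSupports data τ N)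
  let mult (l : (T → Fin (N + 1)) × Fin (B + 1)) (t : T) : ℕ := l.1 t
  refine ⟨Blowup lab mult, fun x y => x.1.1 ≤ y.1.1, fun x => x.1.2, inferInstance,
    fun x => le_rfl, fun x y z => le_trans, fun w => ?_, fun x => ?_⟩
  · obtain ⟨a, ha⟩ := hlab (data w)
    obtain ⟨x, -, hx⟩ := exists_blowup_of_label_eq (mult := mult) he ha
    exact ⟨x, hx⟩
  · obtain ⟨g, hg⟩ := hloc x.1.1
    exact ⟨_, hg.isChart he x⟩

theorem exists_finite_isChart [PartialOrder D] [Finite T] [Nonempty W] {rank : D → ℕ}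
    (hrank : StrictAnti rank) {B : ℕ} (hB : ∀ d, rank d ≤ B) (data : W → D) (τ : W → T)
    (hN : 0 < N) :
    ∃ (U : Type v) (S : U → U → Prop) (σ : U → T),
      Finite U ∧ (∀ x, S x x) ∧ (∀ x y z, S x y → S y z → S x z) ∧ (∀ w, ∃ x, σ x = τ w) ∧
        ∀ x, ∃ π, IsChart N S σ (fun u v => data u ≤ data v) τ x π := by
  obtain ⟨A, hA⟩ := exists_isThinning (fun w => (data w, τ w)) N
  have hmeets := hA.exists_mem hN
  have : Nonempty A := let ⟨v, hv, _⟩ := hmeets (Classical.arbitrary W); ⟨⟨v, hv⟩⟩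
  have hfibre d t : {w : A | data w = d ∧ τ w = t}.encard ≤ N := by
    rw [← Subtype.val_injective.encard_image]
    refine (Set.encard_le_encard ?_).trans ((hA (d, t)).trans_le (min_le_left _ _))
    rintro _ ⟨w, ⟨rfl, rfl⟩, rfl⟩
    exact ⟨w.2, rfl⟩
  obtain ⟨U, S, σ, hfin, hrefl, htrans, hσ, hchart⟩ :=
    exists_finite_isChart_of_encard_le hrank hB hfibre
  refine ⟨U, S, σ, hfin, hrefl, htrans, fun w => ?_, fun x => ?_⟩
  · obtain ⟨v, hvA, hv⟩ := hmeets w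
    obtain ⟨x, hx⟩ := hσ ⟨v, hvA⟩
    exact ⟨x, hx.trans (congrArg Prod.snd hv)⟩
  · obtain ⟨π, hπ⟩ := hchart x
    exact ⟨_, (hA.isChart_val hN (π x)).comp hπ⟩

end Blowup

theorem s4_local_finite_model_property (φ : MF)
    (h : ∃ (W : Type v) (R : W → W → Prop) (V : ℕ → Set W),
      (∀ x : W, R x x) ∧ (∀ x y z : W, R x y → R y z → R x z) ∧
        (∃ w : W, Sat R V φ w)) :
    ∃ (W : Type) (R : W → W → Prop) (V : ℕ → Set W),
      Finite W ∧ (∀ x : W, R x x) ∧ (∀ x y z : W, R x y → R y z → R x z) ∧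
        (∃ w : W, Sat R V φ w) := by
  obtain ⟨W, R, V, hrefl, htrans, w, hw⟩ := h
  have : Nonempty W := ⟨w⟩
  let cl := φ.subformulas
  let N := φ.grade + 1
  let R' (u v : W) : Prop := profile R V cl N u ≤ profile R V cl N v
  obtain ⟨U, S, σ, hfin, hSrefl, hStrans, hσ, hchart⟩ :=
    exists_finite_isChart Profile.rank_strictAnti Profile.rank_le (profile R V cl N)
      (satType R' V cl) φ.grade.succ_pos
  let V' (p : ℕ) : Set U := {x | ∃ h : .var p ∈ cl, ⟨.var p, h⟩ ∈ σ x}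
  have hV' p (h : .var p ∈ cl) x : x ∈ V' p ↔ ⟨.var p, h⟩ ∈ σ x :=
    ⟨fun ⟨_, hx⟩ => hx, fun hx => ⟨h, hx⟩⟩
  obtain ⟨x, hx⟩ := hσ w
  have hsat : Sat S V' φ x ↔ Sat R V φ w := by
    rw [sat_iff_mem_of_isChart hSrefl hchart hV' subset_rfl φ.grade.le_succ, hx]
    exact sat_profile_le_iff hrefl htrans subset_rfl φ.grade.le_succ w
  exact ⟨U, S, V', hfin, hSrefl, hStrans, x, hsat.2 hw⟩
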